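/- Let A be a nonzero n×n matrix with nonnegative real entries, let g ∈ ℝ^n be nonnegative and h ∈ ℝ^n positive, and let x ∈ ℝ^n be a positive vector with g ≤ x ≤ h (entrywise). Then max_{1≤i,j≤n} A_{ij}·x_j/x_i ≥ max( λ, γ ), where λ = max_{k=1,…,n} (tr(A^{⊗k}))^{1/k} is the max-times spectral radius of A and γ = max_{k=1,…,n−1} (h^− A^{⊗k} g)^{1/k}. -/

import Mathlib

/-!
Let `θ = max_{i,j} A i j * x j / x i`. By definition `A ⊗ x ≤ θ x`, and since `A` is nonnegative
this inequality iterates to `A^{⊗k} ⊗ x ≤ θ^k x` (`mtPow_mul_le`). The diagonal entries of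
`A^{⊗k}` are therefore at most `θ^k`, and so is `h^− A^{⊗k} g`, because `g ≤ x ≤ h`. Taking `k`-th
roots bounds every term of `λ` and of `γ` by `θ`. All the suprema involved take nonnegative values,
so a real supremum over an empty index set, which is `0`, causes no exception.
-/

open scoped BigOperators

/-- Max-times matrix product: `(A ⊗ B) i j = max_k A i k * B k j`. -/
noncomputable def mtMul {n : ℕ} (A B : Matrix (Fin n) (Fin n) ℝ) : Matrix (Fin n) (Fin n) ℝ :=
  fun i j => ⨆ k, A i k * B k j

/-- Max-times matrix power, with `A^{⊗0}` the identity matrix. -/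
noncomputable def mtPow {n : ℕ} (A : Matrix (Fin n) (Fin n) ℝ) : ℕ → Matrix (Fin n) (Fin n) ℝ
  | 0 => 1
  | k + 1 => mtMul A (mtPow A k)

/-- Tropical trace: `tr A = max_i A i i`. -/
noncomputable def mtTrace {n : ℕ} (A : Matrix (Fin n) (Fin n) ℝ) : ℝ :=
  ⨆ i, A i i

/-- The function `Tr(A) = max_{k=1,…,n} tr(A^{⊗k})`. -/
noncomputable def mtTr {n : ℕ} (A : Matrix (Fin n) (Fin n) ℝ) : ℝ :=
  ⨆ k ∈ Finset.Icc 1 n, mtTrace (mtPow A k)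

/-- Kleene star: entrywise maximum of `I, A, A^{⊗2}, …, A^{⊗(n-1)}`. -/
noncomputable def mtStar {n : ℕ} (A : Matrix (Fin n) (Fin n) ℝ) : Matrix (Fin n) (Fin n) ℝ :=
  fun i j => ⨆ k ∈ Finset.range n, mtPow A k i j

/-- Max-times matrix-vector product: `(A ⊗ x) i = max_j A i j * x j`. -/
noncomputable def mtVec {n : ℕ} (A : Matrix (Fin n) (Fin n) ℝ) (x : Fin n → ℝ) : Fin n → ℝ :=
  fun i => ⨆ j, A i j * x j

/-- The alternating product `A^{⊗v 0} ⊗ B ⊗ A^{⊗v 1} ⊗ B ⊗ ⋯ ⊗ B ⊗ A^{⊗v k}`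
(with exactly `k` factors `B`). -/
noncomputable def mtChain {n : ℕ} (A B : Matrix (Fin n) (Fin n) ℝ) :
    (k : ℕ) → (Fin (k + 1) → ℕ) → Matrix (Fin n) (Fin n) ℝ
  | 0, v => mtPow A (v 0)
  | k + 1, v => mtMul (mtPow A (v 0)) (mtMul B (mtChain A B k fun t => v t.succ))

/-- `F_{km}`: the entrywise maximum, over all tuples `(i_0,…,i_k)` of nonnegative integers
with `i_0 + ⋯ + i_k = m`, of the products `A^{⊗i_0} ⊗ B ⊗ A^{⊗i_1} ⊗ ⋯ ⊗ B ⊗ A^{⊗i_k}`. -/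
noncomputable def mtF {n : ℕ} (A B : Matrix (Fin n) (Fin n) ℝ) (k m : ℕ) :
    Matrix (Fin n) (Fin n) ℝ :=
  fun i j => ⨆ v : { v : Fin (k + 1) → ℕ // ∑ t, v t = m }, mtChain A B k v.1 i j

/-- `h^− M g = max_{i,j} M i j * g j / h i`. -/
noncomputable def mtHMG {n : ℕ} (h : Fin n → ℝ) (M : Matrix (Fin n) (Fin n) ℝ)
    (g : Fin n → ℝ) : ℝ :=
  ⨆ i, ⨆ j, M i j * g j / h i

/-- Max-times spectral radius `λ = max_{k=1,…,n} (tr(A^{⊗k}))^{1/k}`. -/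
noncomputable def mtSpecR {n : ℕ} (A : Matrix (Fin n) (Fin n) ℝ) : ℝ :=
  ⨆ k ∈ Finset.Icc 1 n, (mtTrace (mtPow A k)) ^ (1 / (k : ℝ))

/-- `γ = max_{k=1,…,n-1} (h^− A^{⊗k} g)^{1/k}`. -/
noncomputable def mtBnd {n : ℕ} (h : Fin n → ℝ) (A : Matrix (Fin n) (Fin n) ℝ)
    (g : Fin n → ℝ) : ℝ :=
  ⨆ k ∈ Finset.Icc 1 (n - 1), (mtHMG h (mtPow A k) g) ^ (1 / (k : ℝ))

/-- The function `G`. -/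
noncomputable def mtG {n : ℕ} (A B : Matrix (Fin n) (Fin n) ℝ) (h g : Fin n → ℝ)
    (s : ℝ) : ℝ :=
  max (⨆ k ∈ Finset.Icc 1 (n - 1), ⨆ m ∈ Finset.Icc 1 (n - k),
        s ^ (-(m : ℝ) / (k : ℝ)) * (mtTrace (mtF A B k m)) ^ (1 / (k : ℝ)))
      (⨆ k ∈ Finset.Icc 1 (n - 2), ⨆ m ∈ Finset.Icc 1 (n - k - 1),
        s ^ (-(m : ℝ) / (k : ℝ)) * (mtHMG h (mtF A B k m) g) ^ (1 / (k : ℝ)))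

/-- The function `H`. -/
noncomputable def mtH {n : ℕ} (A B : Matrix (Fin n) (Fin n) ℝ) (h g : Fin n → ℝ)
    (t : ℝ) : ℝ :=
  max (⨆ k ∈ Finset.Icc 1 (n - 1), ⨆ m ∈ Finset.Icc 1 (n - k),
        t ^ (-(k : ℝ) / (m : ℝ)) * (mtTrace (mtF A B k m)) ^ (1 / (m : ℝ)))
      (⨆ k ∈ Finset.Icc 1 (n - 2), ⨆ m ∈ Finset.Icc 1 (n - k - 1),
        t ^ (-(k : ℝ) / (m : ℝ)) * (mtHMG h (mtF A B k m) g) ^ (1 / (m : ℝ)))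

theorem mtPow_nonneg {n : ℕ} {A : Matrix (Fin n) (Fin n) ℝ} (hA : ∀ i j, 0 ≤ A i j) (k : ℕ) :
    ∀ i j, 0 ≤ mtPow A k i j := by
  induction k with
  | zero =>
    intro i j
    simp only [mtPow, Matrix.one_apply]
    split_ifs <;> norm_num
  | succ k ih => exact fun i j => Real.iSup_nonneg fun l => mul_nonneg (hA i l) (ih l j)

/-- A subeigenvector inequality `A ⊗ x ≤ θ x` iterates to `A^{⊗k} ⊗ x ≤ θ^k x`. -/
theorem mtPow_mul_le {n : ℕ} {A : Matrix (Fin n) (Fin n) ℝ} (hA : ∀ i j, 0 ≤ A i j)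
    {x : Fin n → ℝ} (hx : ∀ i, 0 < x i) {θ : ℝ} (hθ : 0 ≤ θ)
    (hAx : ∀ i j, A i j * x j ≤ θ * x i) (k : ℕ) :
    ∀ i j, mtPow A k i j * x j ≤ θ ^ k * x i := by
  induction k with
  | zero =>
    intro i j
    simp only [mtPow, Matrix.one_apply, pow_zero, one_mul]
    split_ifs with hij
    · simp [hij]
    · simpa using (hx i).le
  | succ k ih =>
    intro i j
    rw [← le_div_iff₀ (hx j)]
    refine Real.iSup_le (fun l => ?_) (by have := hx i; have := hx j; positivity)
    rw [le_div_iff₀ (hx j)]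
    calc A i l * mtPow A k l j * x j = A i l * (mtPow A k l j * x j) := by ring
      _ ≤ A i l * (θ ^ k * x l) := mul_le_mul_of_nonneg_left (ih l j) (hA i l)
      _ = θ ^ k * (A i l * x l) := by ring
      _ ≤ θ ^ k * (θ * x i) := mul_le_mul_of_nonneg_left (hAx i l) (by positivity)
      _ = θ ^ (k + 1) * x i := by ring

theorem rpow_one_div_le_of_le_pow {y θ : ℝ} {k : ℕ} (hk : 1 ≤ k) (hy : 0 ≤ y) (hθ : 0 ≤ θ)
    (h : y ≤ θ ^ k) : y ^ (1 / (k : ℝ)) ≤ θ := by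
  rw [one_div]
  exact (Real.rpow_le_rpow hy h (by positivity)).trans_eq
    (Real.pow_rpow_inv_natCast hθ (by omega))

/-- For any positive vector `x` with `g ≤ x ≤ h`,
`max_{i,j} A i j * x j / x i ≥ max(λ, γ)`. -/
theorem objective_lower_bound {n : ℕ} (A : Matrix (Fin n) (Fin n) ℝ)
    (hA : ∀ i j, 0 ≤ A i j) (hA0 : ∃ i j, 0 < A i j)
    (g h : Fin n → ℝ) (hg : ∀ i, 0 ≤ g i) (hh : ∀ i, 0 < h i)
    (x : Fin n → ℝ) (hx : ∀ i, 0 < x i)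
    (hgx : ∀ i, g i ≤ x i) (hxh : ∀ i, x i ≤ h i) :
    max (mtSpecR A) (mtBnd h A g) ≤ ⨆ i, ⨆ j, A i j * x j / x i := by
  set θ : ℝ := ⨆ i, ⨆ j, A i j * x j / x i with hθdef
  have hθ : 0 ≤ θ := Real.iSup_nonneg fun i => Real.iSup_nonneg fun j =>
    div_nonneg (mul_nonneg (hA i j) (hx j).le) (hx i).le
  have hAx : ∀ i j, A i j * x j ≤ θ * x i := by
    intro i j
    rw [← div_le_iff₀ (hx i)]
    exact (le_ciSup (f := fun j => A i j * x j / x i) (Set.finite_range _).bddAbove j).trans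
      (le_ciSup (f := fun i => ⨆ j, A i j * x j / x i) (Set.finite_range _).bddAbove i)
  have hpow := mtPow_mul_le hA hx hθ hAx
  have hnn := mtPow_nonneg hA
  refine max_le ?_ ?_
  · refine Real.iSup_le (fun k => Real.iSup_le (fun hk => ?_) hθ) hθ
    refine rpow_one_div_le_of_le_pow (Finset.mem_Icc.1 hk).1
      (Real.iSup_nonneg fun i => hnn k i i) hθ ?_
    exact Real.iSup_le (fun i => le_of_mul_le_mul_right (hpow k i i) (hx i)) (by positivity)
  · refine Real.iSup_le (fun k => Real.iSup_le (fun hk => ?_) hθ) hθ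
    refine rpow_one_div_le_of_le_pow (Finset.mem_Icc.1 hk).1
      (Real.iSup_nonneg fun i => Real.iSup_nonneg fun j =>
        div_nonneg (mul_nonneg (hnn k i j) (hg j)) (hh i).le) hθ ?_
    refine Real.iSup_le (fun i => Real.iSup_le (fun j => ?_) (by positivity)) (by positivity)
    rw [div_le_iff₀ (hh i)]
    calc mtPow A k i j * g j ≤ mtPow A k i j * x j :=
          mul_le_mul_of_nonneg_left (hgx j) (hnn k i j)
      _ ≤ θ ^ k * x i := hpow k i j
      _ ≤ θ ^ k * h i := mul_le_mul_of_nonneg_left (hxh i) (by positivity)
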